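/- arXiv:1311.3474 — 9 statements merged into one kernel-verified Lean document; each statement's English description precedes it below -/
import Mathlib

section
/- Let Λ₋, Λ₊ : ℝ → ℝ be continuous functions with Λ₋(ζ) < Λ₊(ζ) for all ζ. Then the Jacobian J(α,β) = (∂t/∂α)(∂x/∂β) − (∂t/∂β)(∂x/∂α) of the hodograph map equals −(Λ₊(β) − Λ₋(α)) / ((Λ₊(α) − Λ₋(α))(Λ₊(β) − Λ₋(β))); consequently J(α,β) = 0 if and only if Λ₋(α) = Λ₊(β), i.e., a point (α,β) is a singular point of the map Π(α,β) = (t(α,β), x(α,β)) exactly when Λ₋(α) = Λ₊(β). -/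
/-!
By the fundamental theorem of calculus (the integrands are continuous since `Λp - Λm` never
vanishes), the four partial derivatives are
`t_α = -1/(Λp α - Λm α)`, `t_β = 1/(Λp β - Λm β)`,
`x_α = -Λm α/(Λp α - Λm α)`, `x_β = Λp β/(Λp β - Λm β)`:
in `x` the averaged term `(Λp + Λm)/(Λp - Λm)` combines with the linear one to leave a single
speed. The Jacobian formula is then algebra, and since its denominator is positive it vanishes
exactly when its numerator does.
-/

/-- The time component of the hodograph map. -/
noncomputable def tmap (Λm Λp : ℝ → ℝ) (α β : ℝ) : ℝ :=
  ∫ ζ in α..β, 1 / (Λp ζ - Λm ζ)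

/-- The space component of the hodograph map. -/
noncomputable def xmap (Λm Λp : ℝ → ℝ) (α β : ℝ) : ℝ :=
  (1 / 2) * (α + β + ∫ ζ in α..β, (Λp ζ + Λm ζ) / (Λp ζ - Λm ζ))

/-- The Jacobian `J(α,β) = t_α x_β − t_β x_α` of the hodograph map equals
`−(Λ₊(β) − Λ₋(α)) / ((Λ₊(α) − Λ₋(α))(Λ₊(β) − Λ₋(β)))`; consequently
`J(α,β) = 0` iff `Λ₋(α) = Λ₊(β)`, i.e. `(α,β)` is a singular point of `Π`
exactly when `Λ₋(α) = Λ₊(β)`. -/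
theorem hodograph_jacobian
    (Λm Λp : ℝ → ℝ) (hm : Continuous Λm) (hp : Continuous Λp)
    (hlt : ∀ ζ : ℝ, Λm ζ < Λp ζ) (α β : ℝ) :
    deriv (fun a => tmap Λm Λp a β) α * deriv (fun b => xmap Λm Λp α b) β
      - deriv (fun b => tmap Λm Λp α b) β * deriv (fun a => xmap Λm Λp a β) α
      = -((Λp β - Λm α) / ((Λp α - Λm α) * (Λp β - Λm β))) ∧
    (deriv (fun a => tmap Λm Λp a β) α * deriv (fun b => xmap Λm Λp α b) β
      - deriv (fun b => tmap Λm Λp α b) β * deriv (fun a => xmap Λm Λp a β) α = 0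
      ↔ Λm α = Λp β) := by
  have hne : ∀ ζ, Λp ζ - Λm ζ ≠ 0 := fun ζ => (sub_pos.2 (hlt ζ)).ne'
  have hf : Continuous fun ζ => 1 / (Λp ζ - Λm ζ) := continuous_const.div (hp.sub hm) hne
  have hg : Continuous fun ζ => (Λp ζ + Λm ζ) / (Λp ζ - Λm ζ) :=
    (hp.add hm).div (hp.sub hm) hne
  have hta : deriv (fun a => tmap Λm Λp a β) α = -(1 / (Λp α - Λm α)) :=
    (intervalIntegral.integral_hasDerivAt_left (hf.intervalIntegrable α β)
      (hf.stronglyMeasurableAtFilter _ _) hf.continuousAt).deriv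
  have htb : deriv (fun b => tmap Λm Λp α b) β = 1 / (Λp β - Λm β) :=
    (intervalIntegral.integral_hasDerivAt_right (hf.intervalIntegrable α β)
      (hf.stronglyMeasurableAtFilter _ _) hf.continuousAt).deriv
  have hxa : deriv (fun a => xmap Λm Λp a β) α = -(Λm α / (Λp α - Λm α)) := by
    have h := ((((hasDerivAt_id α).add_const β).add
      (intervalIntegral.integral_hasDerivAt_left (hg.intervalIntegrable α β)
        (hg.stronglyMeasurableAtFilter _ _) hg.continuousAt)).const_mul (1 / 2 : ℝ)).deriv
    refine Eq.trans h ?_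
    have := hne α
    field_simp
    ring
  have hxb : deriv (fun b => xmap Λm Λp α b) β = Λp β / (Λp β - Λm β) := by
    have h := ((((hasDerivAt_id β).const_add α).add
      (intervalIntegral.integral_hasDerivAt_right (hg.intervalIntegrable α β)
        (hg.stronglyMeasurableAtFilter _ _) hg.continuousAt)).const_mul (1 / 2 : ℝ)).deriv
    refine Eq.trans h ?_
    have := hne β
    field_simp
    ring
  have hJ : deriv (fun a => tmap Λm Λp a β) α * deriv (fun b => xmap Λm Λp α b) β
      - deriv (fun b => tmap Λm Λp α b) β * deriv (fun a => xmap Λm Λp a β) α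
      = -((Λp β - Λm α) / ((Λp α - Λm α) * (Λp β - Λm β))) := by
    rw [hta, htb, hxa, hxb]
    have := hne α
    have := hne β
    field_simp
    ring
  refine ⟨hJ, ?_⟩
  rw [hJ, neg_eq_zero, div_eq_zero_iff, or_iff_left (mul_ne_zero (hne α) (hne β)), sub_eq_zero,
    eq_comm]
end

section
/- Let Λ₋, Λ₊ : ℝ → ℝ be C¹ functions with Λ₋(ζ) < Λ₊(ζ) and Λ₊'(ζ) < 0 for all ζ, and let b : ℝ → ℝ be a C¹ function with Λ₊(b(α)) = Λ₋(α) for all α. Then the functions α ↦ t(α, b(α)) and α ↦ x(α, b(α)) are differentiable, with derivatives d/dα [t(α, b(α))] = f(α)/Λ₊'(b(α)) and d/dα [x(α, b(α))] = Λ₊(b(α)) · f(α)/Λ₊'(b(α)), where f(α) = Λ₋'(α)/(Λ₊(b(α)) − Λ₋(b(α))) − Λ₊'(b(α))/(Λ₊(α) − Λ₋(α)). -/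
/-- The function `f` of assumption (H4). -/
noncomputable def ffun (Λm Λp b : ℝ → ℝ) (α : ℝ) : ℝ :=
  deriv Λm α / (Λp (b α) - Λm (b α)) - deriv Λp (b α) / (Λp α - Λm α)

/-- Leibniz rule for an integral from `a` to `b a`. -/
lemma hasDerivAt_integral_along {g b : ℝ → ℝ} (hg : Continuous g) {α b' : ℝ}
    (hb : HasDerivAt b b' α) :
    HasDerivAt (fun a => ∫ ζ in a..b a, g ζ) (g (b α) * b' - g α) α := by
  have h0 : ∀ y, HasDerivAt (fun u => ∫ ζ in (0 : ℝ)..u, g ζ) (g y) y := fun y =>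
    intervalIntegral.integral_hasDerivAt_right (hg.intervalIntegrable _ _)
      hg.stronglyMeasurable.stronglyMeasurableAtFilter hg.continuousAt
  have h1 := ((h0 (b α)).comp α hb).sub (h0 α)
  refine h1.congr_of_eventuallyEq (Filter.Eventually.of_forall fun a => ?_)
  exact (intervalIntegral.integral_interval_sub_left (hg.intervalIntegrable _ _)
    (hg.intervalIntegrable _ _)).symm

/-- Along the singular curve `Υ(α) = (α, b(α))`, the maps
`α ↦ t(α, b(α))` and `α ↦ x(α, b(α))` are differentiable with
derivatives `f(α)/Λ₊'(b(α))` and `Λ₊(b(α)) · f(α)/Λ₊'(b(α))`. -/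
theorem deriv_along_singular_curve
    (Λm Λp b : ℝ → ℝ)
    (hm : ContDiff ℝ 1 Λm) (hp : ContDiff ℝ 1 Λp) (hb : ContDiff ℝ 1 b)
    (hlt : ∀ ζ : ℝ, Λm ζ < Λp ζ) (hp' : ∀ ζ : ℝ, deriv Λp ζ < 0)
    (hcomp : ∀ α : ℝ, Λp (b α) = Λm α) (α : ℝ) :
    HasDerivAt (fun a => tmap Λm Λp a (b a))
      (ffun Λm Λp b α / deriv Λp (b α)) α ∧
    HasDerivAt (fun a => xmap Λm Λp a (b a))
      (Λp (b α) * (ffun Λm Λp b α / deriv Λp (b α))) α := by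
  have hbd : HasDerivAt b (deriv b α) α := (hb.differentiable one_ne_zero α).hasDerivAt
  have hchain : deriv Λp (b α) * deriv b α = deriv Λm α := by
    have h1 := ((hp.differentiable one_ne_zero (b α)).hasDerivAt).comp α hbd
    rw [show Λp ∘ b = Λm from funext hcomp] at h1
    exact h1.deriv.symm
  have hne : ∀ ζ, Λp ζ - Λm ζ ≠ 0 := fun ζ => (sub_pos.2 (hlt ζ)).ne'
  have hD : Continuous fun ζ => Λp ζ - Λm ζ := hp.continuous.sub hm.continuous
  have hf : ffun Λm Λp b α / deriv Λp (b α) =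
      deriv b α / (Λp (b α) - Λm (b α)) - 1 / (Λp α - Λm α) := by
    have h1 := hne α
    have h2 := hne (b α)
    have h3 := (hp' (b α)).ne
    rw [ffun, ← hchain]
    field_simp
  rw [hf]
  constructor
  · have h := hasDerivAt_integral_along (continuous_const (y := (1 : ℝ)).div hD hne) hbd
    refine h.congr_deriv ?_
    simp only [Pi.div_apply]
    ring
  · have h := hasDerivAt_integral_along ((hp.continuous.add hm.continuous).div hD hne) hbd
    refine ((((hasDerivAt_id α).add hbd).add h).const_mul (1 / 2 : ℝ)).congr_deriv ?_
    have hα : Λp (b α) * (1 / (Λp α - Λm α)) =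
        ((Λp α + Λm α) / (Λp α - Λm α) - 1) / 2 := by
      have h1 := hne α
      rw [hcomp α]
      field_simp
      ring
    have hβ : Λp (b α) * (deriv b α / (Λp (b α) - Λm (b α))) =
        deriv b α * ((Λp (b α) + Λm (b α)) / (Λp (b α) - Λm (b α)) + 1) / 2 := by
      have h2 := hne (b α)
      field_simp
      ring
    rw [mul_sub, hα, hβ]
    simp only [Pi.div_apply, Pi.add_apply]
    ring
end

section
/- Let Λ₋, Λ₊ : ℝ → ℝ be C² functions with Λ₋(ζ) < Λ₊(ζ), Λ₋'(ζ) < 0 and Λ₊'(ζ) < 0 for all ζ, let b : ℝ → ℝ be a C¹ function with Λ₊(b(α)) = Λ₋(α) for all α, and suppose α₀ < β₀ := b(α₀) satisfy Λ₋(α₀) = Λ₊(β₀) = 0, f(α₀) = 0 and f'(α₀) < 0. Then α₀ is a strict local minimum point of the function T(α) := t(α, b(α)): there exists ε > 0 such that T(α) > T(α₀) for all α with 0 < |α − α₀| < ε. Equivalently, the blowup time t₀ = t(α₀, β₀) is the unique minimum of T on a neighborhood (α₀ − ε, α₀ + ε). -/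
/-- The function `T α = t(α, b α)` is differentiable, and its derivative times the negative factor
`Λp' (b α)` is `f α`. -/
theorem exists_hasDerivAt_tmap
    {Λm Λp b : ℝ → ℝ}
    (hm : ContDiff ℝ 2 Λm) (hp : ContDiff ℝ 2 Λp) (hb : ContDiff ℝ 1 b)
    (hlt : ∀ ζ : ℝ, Λm ζ < Λp ζ) (hcomp : ∀ α : ℝ, Λp (b α) = Λm α) (α : ℝ) :
    ∃ d : ℝ, HasDerivAt (fun x => tmap Λm Λp x (b x)) d α ∧
      ffun Λm Λp b α = deriv Λp (b α) * d := by
  have hne : ∀ ζ, Λp ζ - Λm ζ ≠ 0 := fun ζ => (sub_pos.2 (hlt ζ)).ne'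
  have hg : Continuous fun ζ => 1 / (Λp ζ - Λm ζ) :=
    continuous_const.div (hp.continuous.sub hm.continuous) hne
  have hF : ∀ x, HasDerivAt (fun u => ∫ ζ in (0 : ℝ)..u, 1 / (Λp ζ - Λm ζ))
      (1 / (Λp x - Λm x)) x := fun x => hg.integral_hasStrictDerivAt 0 x |>.hasDerivAt
  have hbd : HasDerivAt b (deriv b α) α := (hb.differentiable (by norm_num) α).hasDerivAt
  have hpd : HasDerivAt Λp (deriv Λp (b α)) (b α) :=
    (hp.differentiable (by norm_num) (b α)).hasDerivAt
  have hchain : deriv Λm α = deriv Λp (b α) * deriv b α := by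
    have h := (hpd.comp α hbd).deriv
    rwa [show Λp ∘ b = Λm from funext hcomp] at h
  refine ⟨1 / (Λp (b α) - Λm (b α)) * deriv b α - 1 / (Λp α - Λm α), ?_, ?_⟩
  · have hT : (fun x => tmap Λm Λp x (b x)) = fun x =>
        (∫ ζ in (0 : ℝ)..(b x), 1 / (Λp ζ - Λm ζ)) - ∫ ζ in (0 : ℝ)..x, 1 / (Λp ζ - Λm ζ) := by
      funext x
      exact (intervalIntegral.integral_interval_sub_left
        (hg.intervalIntegrable _ _) (hg.intervalIntegrable _ _)).symm
    rw [hT]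
    exact ((hF (b α)).comp α hbd).sub (hF α)
  · rw [ffun, hchain]
    ring

/-- Under assumptions (H1)–(H5), `α₀` is a strict local minimum point of
`T(α) = t(α, b(α))`: there is `ε > 0` such that `T(α) > T(α₀)` whenever
`0 < |α − α₀| < ε`; i.e. the blowup time `t₀ = t(α₀, β₀)` is the unique
minimum of `T` on `(α₀ − ε, α₀ + ε)`. -/
theorem blowup_time_strict_local_min
    (Λm Λp b : ℝ → ℝ)
    (hm : ContDiff ℝ 2 Λm) (hp : ContDiff ℝ 2 Λp) (hb : ContDiff ℝ 1 b)
    (hlt : ∀ ζ : ℝ, Λm ζ < Λp ζ)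
    (hm' : ∀ ζ : ℝ, deriv Λm ζ < 0) (hp' : ∀ ζ : ℝ, deriv Λp ζ < 0)
    (hcomp : ∀ α : ℝ, Λp (b α) = Λm α)
    (α₀ β₀ : ℝ) (hβ : b α₀ = β₀) (hαβ : α₀ < β₀)
    (hm0 : Λm α₀ = 0) (hp0 : Λp β₀ = 0)
    (hf0 : ffun Λm Λp b α₀ = 0)
    (hf' : deriv (ffun Λm Λp b) α₀ < 0) :
    ∃ ε > 0, ∀ α : ℝ, 0 < |α - α₀| → |α - α₀| < ε →
      tmap Λm Λp α₀ (b α₀) < tmap Λm Λp α (b α) := by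
  choose d hd hfd using exists_hasDerivAt_tmap hm hp hb hlt hcomp
  have hcont : Continuous fun x => tmap Λm Λp x (b x) :=
    continuous_iff_continuousAt.2 fun x => (hd x).continuousAt
  have hsign := eventually_nhdsWithin_sign_eq_of_deriv_neg hf' hf0
  obtain ⟨ε, hε, h⟩ := Metric.eventually_nhds_iff.1 hsign
  simp only [Real.dist_eq] at h
  refine ⟨ε, hε, fun α hα hαε => ?_⟩
  rcases lt_or_gt_of_ne (sub_ne_zero.1 (abs_pos.1 hα)) with hlt' | hgt'
  · have hanti : StrictAntiOn (fun x => tmap Λm Λp x (b x)) (Set.Icc α α₀) := by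
      refine strictAntiOn_of_deriv_neg (convex_Icc _ _) hcont.continuousOn fun x hx => ?_
      rw [interior_Icc] at hx
      have hs := h (y := x) (by rw [abs_lt] at *; constructor <;> linarith [hx.1, hx.2])
      rw [sign_pos (sub_pos.2 hx.2), sign_eq_one_iff, hfd] at hs
      rw [(hd x).deriv]
      exact neg_of_mul_pos_right hs (hp' _).le
    exact hanti (Set.left_mem_Icc.2 hlt'.le) (Set.right_mem_Icc.2 hlt'.le) hlt'
  · have hmono : StrictMonoOn (fun x => tmap Λm Λp x (b x)) (Set.Icc α₀ α) := by
      refine strictMonoOn_of_deriv_pos (convex_Icc _ _) hcont.continuousOn fun x hx => ?_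
      rw [interior_Icc] at hx
      have hs := h (y := x) (by rw [abs_lt] at *; constructor <;> linarith [hx.1, hx.2])
      rw [sign_neg (sub_neg.2 hx.1), sign_eq_neg_one_iff, hfd] at hs
      rw [(hd x).deriv]
      exact pos_of_mul_neg_right hs (hp' _).le
    exact hmono (Set.left_mem_Icc.2 hgt'.le) (Set.right_mem_Icc.2 hgt'.le) hgt'
end

section
/- Let Λ₋, Λ₊ : ℝ → ℝ be C² functions with Λ₋(ζ) < Λ₊(ζ), Λ₋'(ζ) < 0 and Λ₊'(ζ) < 0 for all ζ, let b : ℝ → ℝ be a C¹ function with Λ₊(b(α)) = Λ₋(α) for all α, and suppose α₀ < β₀ := b(α₀) satisfy Λ₋(α₀) = Λ₊(β₀) = 0, f(α₀) = 0 and f'(α₀) < 0. Then there exists ε > 0 such that, writing X(α) = x(α, b(α)) and T(α) = t(α, b(α)): X is strictly monotone on (α₀ − ε, α₀), and the function t = T ∘ X⁻¹ defined on the image X((α₀ − ε, α₀)) is strictly concave there (its second derivative equals −Λ₋'(α)Λ₊'(b(α)) / (Λ₋(α)² Λ₊(b(α)) f(α)) < 0 at the point X(α)); the same holds on (α₀,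 α₀ + ε). That is, both branches Γ_l and Γ_r of the singular image curve are concave graphs t = t(x). -/
/-- `T(α) = t(α, b(α))` along the singular curve. -/
noncomputable def Tb (Λm Λp b : ℝ → ℝ) (α : ℝ) : ℝ := tmap Λm Λp α (b α)

/-- `X(α) = x(α, b(α))` along the singular curve. -/
noncomputable def Xb (Λm Λp b : ℝ → ℝ) (α : ℝ) : ℝ := xmap Λm Λp α (b α)

open Set Filter Topology

/-- A parametrised curve `(X, T)` with `X' = L * T' < 0` is a graph `T = g (X)` of slope `1 / L`.
Since `X` and `L` both decrease along the curve, the slope decreases in `X` and the graph is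
strictly concave. -/
lemma graph_strictConcaveOn {X T L L' τ : ℝ → ℝ} {a c : ℝ}
    (hX : ∀ x ∈ Ioo a c, HasStrictDerivAt X (L x * τ x) x)
    (hT : ∀ x ∈ Ioo a c, HasDerivAt T (τ x) x)
    (hL : ∀ x ∈ Ioo a c, HasDerivAt L (L' x) x)
    (hneg : ∀ x ∈ Ioo a c, L x * τ x < 0)
    (hL' : ∀ x ∈ Ioo a c, L' x < 0) :
    StrictAntiOn X (Ioo a c) ∧ ∃ g : ℝ → ℝ,
      (∀ x ∈ Ioo a c, g (X x) = T x) ∧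
      StrictConcaveOn ℝ (X '' Ioo a c) g ∧
      ∀ x ∈ Ioo a c, deriv (deriv g) (X x) = -L' x / (L x ^ 2 * (L x * τ x)) ∧
        deriv (deriv g) (X x) < 0 := by
  have hXc : ContinuousOn X (Ioo a c) := fun x hx =>
    (hX x hx).hasDerivAt.continuousAt.continuousWithinAt
  have hanti : StrictAntiOn X (Ioo a c) := by
    refine strictAntiOn_of_deriv_neg (convex_Ioo a c) hXc fun x hx => ?_
    rw [interior_Ioo] at hx
    rw [(hX x hx).hasDerivAt.deriv]
    exact hneg x hx
  refine ⟨hanti, ?_⟩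
  set Y : ℝ → ℝ := Function.invFunOn X (Ioo a c) with hY
  have hYX : ∀ x ∈ Ioo a c, Y (X x) = x := fun x hx =>
    hanti.injOn.leftInvOn_invFunOn hx
  have hYd : ∀ x ∈ Ioo a c, HasDerivAt Y (L x * τ x)⁻¹ (X x) := fun x hx =>
    ((hX x hx).to_local_left_inverse (hneg x hx).ne
      (eventually_of_mem (Ioo_mem_nhds hx.1 hx.2) hYX)).hasDerivAt
  have himg : ∀ x ∈ Ioo a c, X '' Ioo a c ∈ 𝓝 (X x) := fun x hx => by
    rw [← (hX x hx).map_nhds_eq (hneg x hx).ne]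
    exact image_mem_map (Ioo_mem_nhds hx.1 hx.2)
  have hg1 : ∀ x ∈ Ioo a c, HasDerivAt (T ∘ Y) (L x)⁻¹ (X x) := fun x hx => by
    have h := HasDerivAt.comp (h₂ := T) (h := Y) (h₂' := τ x) (X x)
      (by rw [hYX x hx]; exact hT x hx) (hYd x hx)
    refine h.congr_deriv ?_
    have h1 := left_ne_zero_of_mul (hneg x hx).ne
    have h2 := right_ne_zero_of_mul (hneg x hx).ne
    field_simp
  have hg2 : ∀ x ∈ Ioo a c,
      deriv (deriv (T ∘ Y)) (X x) = -L' x / (L x ^ 2 * (L x * τ x)) := fun x hx => by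
    have hev : deriv (T ∘ Y) =ᶠ[𝓝 (X x)] fun y => (L (Y y))⁻¹ := by
      filter_upwards [himg x hx]
      rintro _ ⟨z, hz, rfl⟩
      rw [(hg1 z hz).deriv, hYX z hz]
    have h1 := left_ne_zero_of_mul (hneg x hx).ne
    have h := HasDerivAt.comp (h₂ := fun z => (L z)⁻¹) (h := Y)
      (h₂' := -L' x / L x ^ 2) (X x)
      (by rw [hYX x hx]; exact (hL x hx).fun_inv h1) (hYd x hx)
    rw [hev.deriv_eq]
    refine h.deriv.trans ?_
    rw [← div_eq_mul_inv, div_div]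
  have hg3 : ∀ x ∈ Ioo a c, deriv (deriv (T ∘ Y)) (X x) < 0 := fun x hx => by
    rw [hg2 x hx]
    have h1 := left_ne_zero_of_mul (hneg x hx).ne
    exact div_neg_of_pos_of_neg (neg_pos.2 (hL' x hx))
      (mul_neg_of_pos_of_neg (by positivity) (hneg x hx))
  refine ⟨T ∘ Y, fun x hx => by simp [hYX x hx], ?_, fun x hx => ⟨hg2 x hx, hg3 x hx⟩⟩
  refine strictConcaveOn_of_deriv2_neg
    (isPreconnected_Ioo.image X hXc).ordConnected.convex ?_ ?_
  · rintro _ ⟨x, hx, rfl⟩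
    exact (hg1 x hx).continuousAt.continuousWithinAt
  · intro y hy
    obtain ⟨x, hx, rfl⟩ := interior_subset hy
    exact hg3 x hx

lemma hasStrictDerivAt_integral_to {h b : ℝ → ℝ} (hh : Continuous h) {b' α : ℝ}
    (hb : HasStrictDerivAt b b' α) :
    HasStrictDerivAt (fun a => ∫ ζ in a..b a, h ζ) (h (b α) * b' - h α) α := by
  have hF := fun x => hh.integral_hasStrictDerivAt 0 x
  have h1 := ((hF (b α)).comp α hb).sub (hF α)
  refine h1.congr_of_eventuallyEq (Eventually.of_forall fun a => ?_)
  exact intervalIntegral.integral_interval_sub_left (μ := MeasureTheory.volume)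
    (hh.intervalIntegrable _ _) (hh.intervalIntegrable _ _)

/-- Differentiating `Λp (b α) = Λm α` gives `b' = Λm' / Λp'(b)`. -/
lemma hasStrictDerivAt_b {Λm Λp b : ℝ → ℝ} (hp : ContDiff ℝ 2 Λp) (hb : ContDiff ℝ 1 b)
    (hp' : ∀ ζ : ℝ, deriv Λp ζ < 0) (hcomp : ∀ α : ℝ, Λp (b α) = Λm α) (α : ℝ) :
    HasStrictDerivAt b (deriv Λm α / deriv Λp (b α)) α := by
  have h1 := hb.contDiffAt.hasStrictDerivAt (x := α) one_ne_zero
  refine h1.congr_deriv ?_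
  have h2 := HasDerivAt.comp α
    ((hp.differentiable two_ne_zero).differentiableAt (x := b α)).hasDerivAt h1.hasDerivAt
  rw [show Λp ∘ b = Λm from funext hcomp] at h2
  rw [h2.deriv, mul_div_cancel_left₀ _ (hp' _).ne]

lemma hasStrictDerivAt_Tb {Λm Λp b : ℝ → ℝ} (hm : ContDiff ℝ 2 Λm) (hp : ContDiff ℝ 2 Λp)
    (hb : ContDiff ℝ 1 b) (hlt : ∀ ζ : ℝ, Λm ζ < Λp ζ) (hp' : ∀ ζ : ℝ, deriv Λp ζ < 0)
    (hcomp : ∀ α : ℝ, Λp (b α) = Λm α) (α : ℝ) :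
    HasStrictDerivAt (Tb Λm Λp b) (ffun Λm Λp b α / deriv Λp (b α)) α := by
  have hne : ∀ ζ, Λp ζ - Λm ζ ≠ 0 := fun ζ => (sub_pos.2 (hlt ζ)).ne'
  have hc : Continuous fun ζ => 1 / (Λp ζ - Λm ζ) :=
    continuous_const.div (hp.continuous.sub hm.continuous) hne
  refine (hasStrictDerivAt_integral_to hc (hasStrictDerivAt_b hp hb hp' hcomp α)).congr_deriv ?_
  have h1 := hne α
  have h2 := hne (b α)
  have h3 := (hp' (b α)).ne
  unfold ffun
  field_simp

lemma hasStrictDerivAt_Xb {Λm Λp b : ℝ → ℝ} (hm : ContDiff ℝ 2 Λm) (hp : ContDiff ℝ 2 Λp)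
    (hb : ContDiff ℝ 1 b) (hlt : ∀ ζ : ℝ, Λm ζ < Λp ζ) (hp' : ∀ ζ : ℝ, deriv Λp ζ < 0)
    (hcomp : ∀ α : ℝ, Λp (b α) = Λm α) (α : ℝ) :
    HasStrictDerivAt (Xb Λm Λp b) (Λm α * (ffun Λm Λp b α / deriv Λp (b α))) α := by
  have hne : ∀ ζ, Λp ζ - Λm ζ ≠ 0 := fun ζ => (sub_pos.2 (hlt ζ)).ne'
  have hc : Continuous fun ζ => (Λp ζ + Λm ζ) / (Λp ζ - Λm ζ) :=
    (hp.continuous.add hm.continuous).div (hp.continuous.sub hm.continuous) hne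
  have hb' := hasStrictDerivAt_b hp hb hp' hcomp α
  refine ((((hasStrictDerivAt_id α).add hb').add
    (hasStrictDerivAt_integral_to hc hb')).const_mul (1 / 2 : ℝ)).congr_deriv ?_
  have h1 := hne α
  have h2 := hne (b α)
  have h3 := (hp' (b α)).ne
  unfold ffun
  rw [hcomp] at h2 ⊢
  field_simp
  ring

/-- Under assumptions (H1)–(H5), there is `ε > 0` such that on each of the
intervals `(α₀ − ε, α₀)` and `(α₀, α₀ + ε)` the map `X(α) = x(α, b(α))` is
strictly monotone, and the branch of the singular image curve is the graph of
a strictly concave function `t = g(x)` (with `g(X(α)) = T(α)`), whose second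
derivative at `X(α)` equals `−Λ₋'(α)Λ₊'(b(α)) / (Λ₋(α)² Λ₊(b(α)) f(α)) < 0`. -/
theorem branches_concavity
    (Λm Λp b : ℝ → ℝ)
    (hm : ContDiff ℝ 2 Λm) (hp : ContDiff ℝ 2 Λp) (hb : ContDiff ℝ 1 b)
    (hlt : ∀ ζ : ℝ, Λm ζ < Λp ζ)
    (hm' : ∀ ζ : ℝ, deriv Λm ζ < 0) (hp' : ∀ ζ : ℝ, deriv Λp ζ < 0)
    (hcomp : ∀ α : ℝ, Λp (b α) = Λm α)
    (α₀ β₀ : ℝ) (hβ : b α₀ = β₀) (hαβ : α₀ < β₀)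
    (hm0 : Λm α₀ = 0) (hp0 : Λp β₀ = 0)
    (hf0 : ffun Λm Λp b α₀ = 0)
    (hf' : deriv (ffun Λm Λp b) α₀ < 0) :
    ∃ ε > 0,
      ((StrictMonoOn (Xb Λm Λp b) (Set.Ioo (α₀ - ε) α₀) ∨
          StrictAntiOn (Xb Λm Λp b) (Set.Ioo (α₀ - ε) α₀)) ∧
        ∃ g : ℝ → ℝ,
          (∀ α ∈ Set.Ioo (α₀ - ε) α₀, g (Xb Λm Λp b α) = Tb Λm Λp b α) ∧
          StrictConcaveOn ℝ (Xb Λm Λp b '' Set.Ioo (α₀ - ε) α₀) g ∧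
          ∀ α ∈ Set.Ioo (α₀ - ε) α₀,
            deriv (deriv g) (Xb Λm Λp b α)
              = -(deriv Λm α * deriv Λp (b α))
                / (Λm α ^ 2 * Λp (b α) * ffun Λm Λp b α) ∧
            deriv (deriv g) (Xb Λm Λp b α) < 0) ∧
      ((StrictMonoOn (Xb Λm Λp b) (Set.Ioo α₀ (α₀ + ε)) ∨
          StrictAntiOn (Xb Λm Λp b) (Set.Ioo α₀ (α₀ + ε))) ∧
        ∃ g : ℝ → ℝ,
          (∀ α ∈ Set.Ioo α₀ (α₀ + ε), g (Xb Λm Λp b α) = Tb Λm Λp b α) ∧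
          StrictConcaveOn ℝ (Xb Λm Λp b '' Set.Ioo α₀ (α₀ + ε)) g ∧
          ∀ α ∈ Set.Ioo α₀ (α₀ + ε),
            deriv (deriv g) (Xb Λm Λp b α)
              = -(deriv Λm α * deriv Λp (b α))
                / (Λm α ^ 2 * Λp (b α) * ffun Λm Λp b α) ∧
            deriv (deriv g) (Xb Λm Λp b α) < 0) := by
  have hmd : ∀ x, HasDerivAt Λm (deriv Λm x) x := fun x =>
    ((hm.differentiable two_ne_zero).differentiableAt).hasDerivAt
  have hmanti : StrictAnti Λm := strictAnti_of_deriv_neg hm'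
  -- `f` changes sign at `α₀` exactly as `Λm` does, hence `Λm * f > 0` on both sides.
  have hslope : ∀ᶠ x in 𝓝[≠] α₀, slope (ffun Λm Λp b) α₀ x < 0 :=
    (differentiableAt_of_deriv_ne_zero hf'.ne).hasDerivAt.tendsto_slope.eventually_lt_const hf'
  rw [eventually_nhdsWithin_iff, Metric.eventually_nhds_iff] at hslope
  obtain ⟨ε, hε, hball⟩ := hslope
  have hpos : ∀ x, |x - α₀| < ε → x ≠ α₀ → 0 < Λm x * ffun Λm Λp b x := by
    intro x hx hne
    have hs := hball (by rwa [Real.dist_eq]) hne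
    rw [slope_def_field, hf0, sub_zero] at hs
    rcases lt_or_gt_of_ne hne with h | h
    · have h1 := hmanti h
      rw [hm0] at h1
      refine mul_pos h1 ?_
      by_contra hcon
      exact absurd hs (not_lt.2 (div_nonneg_of_nonpos (not_lt.1 hcon) (by linarith)))
    · have h1 := hmanti h
      rw [hm0] at h1
      refine mul_pos_of_neg_of_neg h1 ?_
      by_contra hcon
      exact absurd hs (not_lt.2 (div_nonneg (not_lt.1 hcon) (by linarith)))
  have key : ∀ a c, (∀ x ∈ Ioo a c, 0 < Λm x * ffun Λm Λp b x) →
      ((StrictMonoOn (Xb Λm Λp b) (Ioo a c) ∨ StrictAntiOn (Xb Λm Λp b) (Ioo a c)) ∧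
        ∃ g : ℝ → ℝ,
          (∀ α ∈ Ioo a c, g (Xb Λm Λp b α) = Tb Λm Λp b α) ∧
          StrictConcaveOn ℝ (Xb Λm Λp b '' Ioo a c) g ∧
          ∀ α ∈ Ioo a c,
            deriv (deriv g) (Xb Λm Λp b α)
              = -(deriv Λm α * deriv Λp (b α))
                / (Λm α ^ 2 * Λp (b α) * ffun Λm Λp b α) ∧
            deriv (deriv g) (Xb Λm Λp b α) < 0) := by
    intro a c hac
    obtain ⟨h1, g, h2, h3, h4⟩ := graph_strictConcaveOn (a := a) (c := c)
      (fun x _ => hasStrictDerivAt_Xb hm hp hb hlt hp' hcomp x)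
      (fun x _ => (hasStrictDerivAt_Tb hm hp hb hlt hp' hcomp x).hasDerivAt)
      (fun x _ => hmd x)
      (fun x hx => by
        rw [← mul_div_assoc]
        exact div_neg_of_pos_of_neg (hac x hx) (hp' _))
      (fun x _ => hm' x)
    refine ⟨Or.inr h1, g, h2, h3, fun α hα => ⟨?_, (h4 α hα).2⟩⟩
    rw [(h4 α hα).1, hcomp]
    have e1 := left_ne_zero_of_mul (hac α hα).ne'
    have e2 := right_ne_zero_of_mul (hac α hα).ne'
    have e3 := (hp' (b α)).ne
    field_simp
  refine ⟨ε, hε, key _ _ fun x hx => hpos x ?_ hx.2.ne, key _ _ fun x hx => hpos x ?_ hx.1.ne'⟩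
  · rw [abs_lt]; constructor <;> linarith [hx.1, hx.2]
  · rw [abs_lt]; constructor <;> linarith [hx.1, hx.2]
end

section
/- Let Λ₋, Λ₊ : ℝ → ℝ be C² functions, let b : ℝ → ℝ be differentiable with Λ₊(b(α)) = Λ₋(α) for all α and b'(α) = Λ₋'(α)/Λ₊'(b(α)), and suppose α₀ and β₀ := b(α₀) satisfy Λ₋(α₀) = Λ₊(β₀) = 0, Λ₋(β₀) ≠ 0, Λ₊(α₀) ≠ 0, Λ₊'(β₀) ≠ 0, and f(α₀) = 0. Then f is differentiable at α₀ and f'(α₀) = [Λ₋''(α₀)Λ₊(α₀)² − Λ₋(β₀)²Λ₊''(β₀) + Λ₊'(β₀)Λ₋(β₀)(Λ₊'(β₀) − Λ₋'(β₀) − (Λ₊'(α₀) − Λ₋'(α₀)))] / (−Λ₋(β₀) Λ₊(α₀)²). -/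
/-- The explicit formula (3.11) for `f'(α₀)`: under the stated nondegeneracy
conditions, `f` is differentiable at `α₀` and
`f'(α₀) = [Λ₋''(α₀)Λ₊(α₀)² − Λ₋(β₀)²Λ₊''(β₀)
  + Λ₊'(β₀)Λ₋(β₀)(Λ₊'(β₀) − Λ₋'(β₀) − (Λ₊'(α₀) − Λ₋'(α₀)))]
  / (−Λ₋(β₀)Λ₊(α₀)²)`. -/
theorem deriv_f_formula
    (Λm Λp b : ℝ → ℝ)
    (hm : ContDiff ℝ 2 Λm) (hp : ContDiff ℝ 2 Λp)
    (hcomp : ∀ α : ℝ, Λp (b α) = Λm α)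
    (hb : ∀ α : ℝ, HasDerivAt b (deriv Λm α / deriv Λp (b α)) α)
    (α₀ β₀ : ℝ) (hβ : b α₀ = β₀)
    (hm0 : Λm α₀ = 0) (hp0 : Λp β₀ = 0)
    (hmβ : Λm β₀ ≠ 0) (hpα : Λp α₀ ≠ 0) (hp'β : deriv Λp β₀ ≠ 0)
    (hf0 : ffun Λm Λp b α₀ = 0) :
    DifferentiableAt ℝ (ffun Λm Λp b) α₀ ∧
    deriv (ffun Λm Λp b) α₀
      = (deriv (deriv Λm) α₀ * (Λp α₀) ^ 2
          - (Λm β₀) ^ 2 * deriv (deriv Λp) β₀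
          + deriv Λp β₀ * Λm β₀ *
            (deriv Λp β₀ - deriv Λm β₀ - (deriv Λp α₀ - deriv Λm α₀)))
        / (-(Λm β₀) * (Λp α₀) ^ 2) := by
  subst hβ
  have dm : ∀ x, HasDerivAt Λm (deriv Λm x) x := fun x =>
    (hm.differentiable (by norm_num) x).hasDerivAt
  have dp : ∀ x, HasDerivAt Λp (deriv Λp x) x := fun x =>
    (hp.differentiable (by norm_num) x).hasDerivAt
  have ddm : HasDerivAt (deriv Λm) (deriv (deriv Λm) α₀) α₀ :=
    (hm.differentiable_deriv_two α₀).hasDerivAt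
  have ddp : HasDerivAt (deriv Λp) (deriv (deriv Λp) (b α₀)) (b α₀) :=
    (hp.differentiable_deriv_two (b α₀)).hasDerivAt
  have hD₁ : Λp (b α₀) - Λm (b α₀) ≠ 0 := by simpa [hp0] using hmβ
  have hD₂ : Λp α₀ - Λm α₀ ≠ 0 := by simpa [hm0] using hpα
  have H : HasDerivAt (ffun Λm Λp b) _ α₀ :=
    (ddm.div (((dp _).comp α₀ (hb α₀)).sub ((dm _).comp α₀ (hb α₀))) hD₁).sub
      ((ddp.comp α₀ (hb α₀)).div ((dp α₀).sub (dm α₀)) hD₂)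
  refine ⟨H.differentiableAt, H.deriv.trans ?_⟩
  -- The condition `f(α₀) = 0` expresses `Λ₋'(α₀)` through the other data; in particular
  -- `b'(α₀) = -Λ₋(β₀) / Λ₊(α₀)`.
  have hm' : deriv Λm α₀ = -(deriv Λp (b α₀) * Λm (b α₀)) / Λp α₀ := by
    simp only [ffun, hp0, hm0, zero_sub, sub_zero] at hf0
    field_simp at hf0 ⊢
    linarith
  simp only [Function.comp_apply, Pi.sub_apply, hp0, hm0, zero_sub, sub_zero, hm']
  field_simp
  ring
end

section
/- Define g(A, B) = (A + √(A² + B))^{1/3} + (A − √(A² + B))^{1/3} for real A, B with A² + B ≥ 0, where z^{1/3} is the real (odd) cube root. Let (Aₙ) and (Bₙ) be sequences with Bₙ > 0, Aₙ ≠ 0, and Aₙ²/Bₙ → 0. Then g(Aₙ, Bₙ) · Bₙ^{1/3} / Aₙ → 2/3; i.e., in the regime A² = o(B) one has g(A,B) = (2/3) A B^{−1/3} (1 + o(1)). (This is Case I of Lemma 4.2, where A = −(C₂t̃² + C₃x̃)/2 and B = C₁³t̃³/27, corresponding to x̃ = o(|t̃|^{3/2}).) -/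
/-!
By Cardano's formula, `g = cardano A B` is a root of the cubic `g³ + 3 B^{1/3} g = 2 A`: the two
cube roots have cubes summing to `2 A` and product `-B^{1/3}`.  Multiplying the cubic by
`1 / A` and writing `r = g B^{1/3} / A`, `ε = A² / B`, it becomes `r (3 + ε r²) = 2`.  Since
`ε ≥ 0`, this forces `0 < r ≤ 2/3`, hence `2 / (3 + 4ε/9) ≤ r ≤ 2/3`, and `ε → 0` gives the
limit by squeezing.
-/

open Filter

/-- The real (odd) cube root of a real number. -/
noncomputable def cbrt (z : ℝ) : ℝ := Real.sign z * |z| ^ ((1 : ℝ) / 3)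

/-- The Cardano expression `g(A,B) = (A + √(A² + B))^{1/3} + (A − √(A² + B))^{1/3}`. -/
noncomputable def cardano (A B : ℝ) : ℝ :=
  cbrt (A + Real.sqrt (A ^ 2 + B)) + cbrt (A - Real.sqrt (A ^ 2 + B))

lemma rpow_third_cube {x : ℝ} (hx : 0 ≤ x) : (x ^ ((1 : ℝ) / 3)) ^ 3 = x := by
  rw [← Real.rpow_natCast, ← Real.rpow_mul hx]
  norm_num

lemma cbrt_cube (z : ℝ) : cbrt z ^ 3 = z := by
  unfold cbrt
  rw [mul_pow, rpow_third_cube (abs_nonneg z)]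
  rcases lt_trichotomy z 0 with hz | rfl | hz
  · rw [Real.sign_of_neg hz, abs_of_neg hz]; ring
  · simp
  · rw [Real.sign_of_pos hz, abs_of_pos hz]; ring

lemma cardano_cubic (A B : ℝ) (hB : 0 < B) :
    cardano A B ^ 3 + 3 * B ^ ((1 : ℝ) / 3) * cardano A B = 2 * A := by
  have hS : Real.sqrt (A ^ 2 + B) ^ 2 = A ^ 2 + B := Real.sq_sqrt (by positivity)
  have hx := cbrt_cube (A + Real.sqrt (A ^ 2 + B))
  have hy := cbrt_cube (A - Real.sqrt (A ^ 2 + B))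
  have hb := rpow_third_cube hB.le
  unfold cardano
  set S := Real.sqrt (A ^ 2 + B)
  set x := cbrt (A + S)
  set y := cbrt (A - S)
  set b := B ^ ((1 : ℝ) / 3)
  have hxy : x * y = -b := by
    have hodd : Odd 3 := by decide
    apply hodd.strictMono_pow.injective
    change (x * y) ^ 3 = (-b) ^ 3
    rw [mul_pow, hx, hy, hodd.neg_pow, hb]
    linear_combination -hS
  linear_combination hx + hy + 3 * (x + y) * hxy

/-- The cubic in the rescaled unknown `r = g B^{1/3} / A`. -/
lemma cardano_ratio_eq (A B : ℝ) (hB : 0 < B) (hA : A ≠ 0) :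
    (cardano A B * B ^ ((1 : ℝ) / 3) / A) *
      (3 + A ^ 2 / B * (cardano A B * B ^ ((1 : ℝ) / 3) / A) ^ 2) = 2 := by
  have hc := cardano_cubic A B hB
  have hb := rpow_third_cube hB.le
  have hb0 : B ^ ((1 : ℝ) / 3) ≠ 0 := (Real.rpow_pos_of_pos hB _).ne'
  set b := B ^ ((1 : ℝ) / 3)
  set g := cardano A B
  rw [← hb]
  field_simp
  linear_combination hc

lemma ratio_bounds {r e : ℝ} (he : 0 ≤ e) (h : r * (3 + e * r ^ 2) = 2) :
    2 / (3 + 4 / 9 * e) ≤ r ∧ r ≤ 2 / 3 := by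
  have hp : 0 < 3 + e * r ^ 2 := by positivity
  have hr : 0 < r := pos_of_mul_pos_left (by rw [h]; norm_num) hp.le
  have hr' : r ≤ 2 / 3 := by
    have : 0 ≤ r * (e * r ^ 2) := by positivity
    linarith
  refine ⟨?_, hr'⟩
  rw [div_le_iff₀ (by positivity)]
  have hsq : r ^ 2 ≤ 4 / 9 := by nlinarith
  calc 2 = r * (3 + e * r ^ 2) := h.symm
    _ ≤ r * (3 + e * (4 / 9)) := by gcongr
    _ = r * (3 + 4 / 9 * e) := by ring

/-- Case I of Lemma 4.2: in the regime `A² = o(B)` (with `B > 0`, `A ≠ 0`),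
one has `g(A,B)·B^{1/3}/A → 2/3`, i.e. `g(A,B) = (2/3) A B^{−1/3}(1 + o(1))`. -/
theorem cardano_asymptotics_case_I
    (A B : ℕ → ℝ) (hB : ∀ n, 0 < B n) (hA : ∀ n, A n ≠ 0)
    (h : Tendsto (fun n => (A n) ^ 2 / B n) atTop (nhds 0)) :
    Tendsto (fun n => cardano (A n) (B n) * (B n) ^ ((1 : ℝ) / 3) / A n)
      atTop (nhds (2 / 3)) := by
  have hbd := fun n => ratio_bounds (div_nonneg (sq_nonneg (A n)) (hB n).le)
    (cardano_ratio_eq (A n) (B n) (hB n) (hA n))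
  have hlow : Tendsto (fun n => 2 / (3 + 4 / 9 * ((A n) ^ 2 / B n))) atTop
      (nhds (2 / 3 : ℝ)) := by
    have hden : Tendsto (fun n => 3 + 4 / 9 * ((A n) ^ 2 / B n)) atTop (nhds (3 : ℝ)) := by
      simpa using (h.const_mul (4 / 9 : ℝ)).const_add 3
    exact tendsto_const_nhds.div hden (by norm_num)
  exact tendsto_of_tendsto_of_tendsto_of_le_of_le hlow tendsto_const_nhds
    (fun n => (hbd n).1) (fun n => (hbd n).2)
end

section
/- Let s, u⁺, u⁻, ρ⁺, ρ⁻ be real numbers with ρ⁺ > 0, ρ⁻ > 0 and ρ⁺ ≠ ρ⁻. If the Rankine–Hugoniot conditions s(ρ⁺ − ρ⁻) = ρ⁺u⁺ − ρ⁻u⁻ and s(ρ⁺u⁺ − ρ⁻u⁻) = ρ⁺(u⁺)² − ρ⁻(u⁻)² hold, then u⁺ = u⁻ and s = u⁺ = u⁻. That is, any discontinuity curve x = x(t) of the pressureless jump relations for the Chaplygin system propagates with speed dx/dt = u⁺ = u⁻. -/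
/-- Rankine–Hugoniot conditions for the pressureless jump relations of the
Chaplygin system: if `ρ⁺, ρ⁻ > 0`, `ρ⁺ ≠ ρ⁻`, `s(ρ⁺ − ρ⁻) = ρ⁺u⁺ − ρ⁻u⁻` and
`s(ρ⁺u⁺ − ρ⁻u⁻) = ρ⁺(u⁺)² − ρ⁻(u⁻)²`, then `u⁺ = u⁻` and the discontinuity
speed satisfies `s = u⁺ = u⁻`. -/
theorem rankine_hugoniot_speed
    (s uP uM ρP ρM : ℝ) (hρP : 0 < ρP) (hρM : 0 < ρM) (hne : ρP ≠ ρM)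
    (h1 : s * (ρP - ρM) = ρP * uP - ρM * uM)
    (h2 : s * (ρP * uP - ρM * uM) = ρP * uP ^ 2 - ρM * uM ^ 2) :
    uP = uM ∧ s = uP ∧ s = uM := by
  -- The mass flux `m = ρ (u - s)` relative to the discontinuity agrees on both sides.
  have hm : ρM * (uM - s) = ρP * (uP - s) := by linarith
  -- Momentum conservation then reads `m (u⁺ - u⁻) = 0`.
  have hflux : ρP * (uP - s) * (uP - uM) = 0 := by
    linear_combination uM * hm - h2
  have hP : uP = s := by
    rcases mul_eq_zero.mp hflux with h | h
    · exact sub_eq_zero.mp ((mul_eq_zero.mp h).resolve_left hρP.ne')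
    · -- Equal velocities and equal fluxes leave `(ρ⁺ - ρ⁻) (u⁺ - s) = 0`.
      have h' : (ρP - ρM) * (uP - s) = 0 := by
        linear_combination -hm - ρM * h
      exact sub_eq_zero.mp ((mul_eq_zero.mp h').resolve_left (sub_ne_zero.mpr hne))
  have hM : uM = s := by
    rw [hP, sub_self, mul_zero] at hm
    exact sub_eq_zero.mp ((mul_eq_zero.mp hm).resolve_left hρM.ne')
  exact ⟨hP.trans hM.symm, hP.symm, hM.symm⟩
end

section
/- Let Λ₋, Λ₊ : ℝ → ℝ be continuous functions with Λ₋(ζ) < Λ₊(ζ) for all ζ, let α₀ < β₀ < β̂, and suppose Λ₊(ζ) = 0 for all ζ ∈ [β₀, β̂] (assumption (B2)). Then for every β ∈ [β₀, β̂], x(α₀, β) = x(α₀, β₀) = x₀, and the function β ↦ t(α₀, β) is strictly increasing on [β₀, β̂], mapping [β₀, β̂] onto [t₀, t̂] where t₀ = t(α₀, β₀) and t̂ = t(α₀, β̂). Hence the hodograph map Π sends the singular set {(α₀, β) : β ∈ [β₀, β̂]} onto the vertical segment L = {(t, x₀) : t₀ ≤ t ≤ t̂} in the (t, x)-plane. 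-/
theorem strictMono_tmap {Λm Λp : ℝ → ℝ} (hm : Continuous Λm) (hp : Continuous Λp)
    (hlt : ∀ ζ : ℝ, Λm ζ < Λp ζ) (α : ℝ) : StrictMono (tmap Λm Λp α) := by
  have hc : Continuous fun ζ => 1 / (Λp ζ - Λm ζ) :=
    continuous_const.div (hp.sub hm) fun ζ => (sub_pos.2 (hlt ζ)).ne'
  intro a b hab
  have hpos : 0 < ∫ ζ in a..b, 1 / (Λp ζ - Λm ζ) :=
    intervalIntegral.intervalIntegral_pos_of_pos (hc.intervalIntegrable a b)
      (fun ζ => one_div_pos.2 (sub_pos.2 (hlt ζ))) hab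
  have hadd := intervalIntegral.integral_add_adjacent_intervals
    (hc.intervalIntegrable (μ := MeasureTheory.volume) α a) (hc.intervalIntegrable a b)
  unfold tmap
  linarith

theorem continuous_tmap {Λm Λp : ℝ → ℝ} (hm : Continuous Λm) (hp : Continuous Λp)
    (hlt : ∀ ζ : ℝ, Λm ζ < Λp ζ) (α : ℝ) : Continuous (tmap Λm Λp α) := by
  have hc : Continuous fun ζ => 1 / (Λp ζ - Λm ζ) :=
    continuous_const.div (hp.sub hm) fun ζ => (sub_pos.2 (hlt ζ)).ne'
  exact intervalIntegral.continuous_primitive (fun a b => hc.intervalIntegrable a b) α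

theorem xmap_eq_of_vanishing {Λm Λp : ℝ → ℝ} (hm : Continuous Λm) (hp : Continuous Λp)
    (hlt : ∀ ζ : ℝ, Λm ζ < Λp ζ) (α : ℝ) {a b : ℝ} (hab : a ≤ b)
    (h0 : ∀ ζ ∈ Set.Icc a b, Λp ζ = 0) : xmap Λm Λp α b = xmap Λm Λp α a := by
  have hc : Continuous fun ζ => (Λp ζ + Λm ζ) / (Λp ζ - Λm ζ) :=
    (hp.add hm).div (hp.sub hm) fun ζ => (sub_pos.2 (hlt ζ)).ne'
  have hint : ∫ ζ in a..b, (Λp ζ + Λm ζ) / (Λp ζ - Λm ζ) = ∫ _ in a..b, (-1 : ℝ) := by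
    refine intervalIntegral.integral_congr fun ζ hζ => ?_
    rw [Set.uIcc_of_le hab] at hζ
    have hne : Λm ζ ≠ 0 := by
      have := hlt ζ
      rw [h0 ζ hζ] at this
      exact this.ne
    simp [h0 ζ hζ, hne]
  rw [intervalIntegral.integral_const, smul_eq_mul] at hint
  have hadd := intervalIntegral.integral_add_adjacent_intervals
    (hc.intervalIntegrable (μ := MeasureTheory.volume) α a) (hc.intervalIntegrable a b)
  unfold xmap
  linarith

/-- Line-shape singularity of Type I: if `Λ₊ ≡ 0` on `[β₀, β̂]`
(assumption (B2)), then `x(α₀, β) = x(α₀, β₀) = x₀` for all `β ∈ [β₀, β̂]`,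
the function `β ↦ t(α₀, β)` is strictly increasing on `[β₀, β̂]` mapping it
onto `[t₀, t̂]`, and the hodograph map sends the singular segment
`{(α₀, β) : β ∈ [β₀, β̂]}` onto the vertical segment
`L = {(t, x₀) : t₀ ≤ t ≤ t̂}`. -/
theorem line_shape_singularity_type_I
    (Λm Λp : ℝ → ℝ) (hm : Continuous Λm) (hp : Continuous Λp)
    (hlt : ∀ ζ : ℝ, Λm ζ < Λp ζ)
    (α₀ β₀ βh : ℝ) (h1 : α₀ < β₀) (h2 : β₀ < βh)
    (hB2 : ∀ ζ ∈ Set.Icc β₀ βh, Λp ζ = 0) :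
    (∀ β ∈ Set.Icc β₀ βh, xmap Λm Λp α₀ β = xmap Λm Λp α₀ β₀) ∧
    StrictMonoOn (fun β => tmap Λm Λp α₀ β) (Set.Icc β₀ βh) ∧
    (fun β => tmap Λm Λp α₀ β) '' Set.Icc β₀ βh
      = Set.Icc (tmap Λm Λp α₀ β₀) (tmap Λm Λp α₀ βh) ∧
    (fun β => ((tmap Λm Λp α₀ β, xmap Λm Λp α₀ β) : ℝ × ℝ)) '' Set.Icc β₀ βh
      = {q : ℝ × ℝ |
          q.1 ∈ Set.Icc (tmap Λm Λp α₀ β₀) (tmap Λm Λp α₀ βh) ∧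
          q.2 = xmap Λm Λp α₀ β₀} := by
  have hx : ∀ β ∈ Set.Icc β₀ βh, xmap Λm Λp α₀ β = xmap Λm Λp α₀ β₀ := fun β hβ =>
    xmap_eq_of_vanishing hm hp hlt α₀ hβ.1 fun ζ hζ => hB2 ζ ⟨hζ.1, hζ.2.trans hβ.2⟩
  have hmono := strictMono_tmap hm hp hlt α₀
  have himg : (fun β => tmap Λm Λp α₀ β) '' Set.Icc β₀ βh
      = Set.Icc (tmap Λm Λp α₀ β₀) (tmap Λm Λp α₀ βh) := by
    refine Set.Subset.antisymm ?_
      (intermediate_value_Icc h2.le (continuous_tmap hm hp hlt α₀).continuousOn)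
    rintro _ ⟨β, hβ, rfl⟩
    exact ⟨hmono.monotone hβ.1, hmono.monotone hβ.2⟩
  refine ⟨hx, hmono.strictMonoOn _, himg, ?_⟩
  rw [← himg]
  ext ⟨t, x⟩
  constructor
  · rintro ⟨β, hβ, h⟩
    obtain ⟨rfl, rfl⟩ := Prod.mk.inj h
    exact ⟨⟨β, hβ, rfl⟩, hx β hβ⟩
  · rintro ⟨⟨β, hβ, ht⟩, hxx⟩
    exact ⟨β, hβ, Prod.ext ht ((hx β hβ).trans hxx.symm)⟩
end

section
/- Let Λ₋, Λ₊ : ℝ → ℝ be continuous functions with Λ₋(ζ) < Λ₊(ζ) for all ζ, let α̂ < α₀ < β₀ < β̂, and suppose Λ₋(ζ) = 0 for all ζ ∈ [α̂, α₀] and Λ₊(ζ) = 0 for all ζ ∈ [β₀, β̂] (assumptions (C2)). Then for every α ∈ [α̂, α₀] and β ∈ [β₀, β̂]: x(α, β) = x(α₀, β₀) = x₀, and t(α, β) ≥ t(α₀, β₀) = t₀, with t(α, β) = t₀ if and only if α = α₀ and β = β₀. Hence the hodograph map Π sends the singular set {(α, β) : α ∈ [α̂, α₀], β ∈ [β₀,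 β̂]} into the vertical line segment {(t, x₀) : t ≥ t₀} in the (t, x)-plane. -/
theorem continuous_one_div_sub {Λm Λp : ℝ → ℝ} (hm : Continuous Λm) (hp : Continuous Λp)
    (hlt : ∀ ζ : ℝ, Λm ζ < Λp ζ) : Continuous fun ζ => 1 / (Λp ζ - Λm ζ) :=
  continuous_const.div (hp.sub hm) fun ζ => (sub_pos.2 (hlt ζ)).ne'

theorem tmap_pos {Λm Λp : ℝ → ℝ} (hm : Continuous Λm) (hp : Continuous Λp)
    (hlt : ∀ ζ : ℝ, Λm ζ < Λp ζ) {a b : ℝ} (hab : a < b) : 0 < tmap Λm Λp a b :=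
  intervalIntegral.intervalIntegral_pos_of_pos
    ((continuous_one_div_sub hm hp hlt).intervalIntegrable a b)
    (fun ζ => one_div_pos.2 (sub_pos.2 (hlt ζ))) hab

theorem tmap_add {Λm Λp : ℝ → ℝ} (hm : Continuous Λm) (hp : Continuous Λp)
    (hlt : ∀ ζ : ℝ, Λm ζ < Λp ζ) (a b c : ℝ) :
    tmap Λm Λp a b + tmap Λm Λp b c = tmap Λm Λp a c :=
  intervalIntegral.integral_add_adjacent_intervals
    ((continuous_one_div_sub hm hp hlt).intervalIntegrable a b)
    ((continuous_one_div_sub hm hp hlt).intervalIntegrable b c)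

theorem tmap_self (Λm Λp : ℝ → ℝ) (a : ℝ) : tmap Λm Λp a a = 0 :=
  intervalIntegral.integral_same

/-- Line-shape singularity of Type II: if `Λ₋ ≡ 0` on `[α̂, α₀]` and
`Λ₊ ≡ 0` on `[β₀, β̂]` (assumptions (C2)), then for every `α ∈ [α̂, α₀]` and
`β ∈ [β₀, β̂]` one has `x(α, β) = x(α₀, β₀) = x₀` and `t(α, β) ≥ t₀`, with
equality iff `α = α₀` and `β = β₀`; hence the hodograph map sends the
singular set `[α̂, α₀] × [β₀, β̂]` into the vertical ray
`{(t, x₀) : t ≥ t₀}`. -/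
theorem line_shape_singularity_type_II
    (Λm Λp : ℝ → ℝ) (hm : Continuous Λm) (hp : Continuous Λp)
    (hlt : ∀ ζ : ℝ, Λm ζ < Λp ζ)
    (αh α₀ β₀ βh : ℝ) (h0 : αh < α₀) (h1 : α₀ < β₀) (h2 : β₀ < βh)
    (hC2m : ∀ ζ ∈ Set.Icc αh α₀, Λm ζ = 0)
    (hC2p : ∀ ζ ∈ Set.Icc β₀ βh, Λp ζ = 0) :
    (∀ α ∈ Set.Icc αh α₀, ∀ β ∈ Set.Icc β₀ βh,
      xmap Λm Λp α β = xmap Λm Λp α₀ β₀ ∧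
      tmap Λm Λp α₀ β₀ ≤ tmap Λm Λp α β ∧
      (tmap Λm Λp α β = tmap Λm Λp α₀ β₀ ↔ α = α₀ ∧ β = β₀)) ∧
    (fun p : ℝ × ℝ => ((tmap Λm Λp p.1 p.2, xmap Λm Λp p.1 p.2) : ℝ × ℝ)) ''
        (Set.Icc αh α₀ ×ˢ Set.Icc β₀ βh)
      ⊆ {q : ℝ × ℝ | q.2 = xmap Λm Λp α₀ β₀ ∧ tmap Λm Λp α₀ β₀ ≤ q.1} := by
  have key : ∀ α ∈ Set.Icc αh α₀, ∀ β ∈ Set.Icc β₀ βh,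
      xmap Λm Λp α β = xmap Λm Λp α₀ β₀ ∧
      tmap Λm Λp α₀ β₀ ≤ tmap Λm Λp α β ∧
      (tmap Λm Λp α β = tmap Λm Λp α₀ β₀ ↔ α = α₀ ∧ β = β₀) := by
    rintro α ⟨hα, hα'⟩ β ⟨hβ, hβ'⟩
    have hsplit : tmap Λm Λp α β
        = tmap Λm Λp α α₀ + tmap Λm Λp α₀ β₀ + tmap Λm Λp β₀ β := by
      rw [tmap_add hm hp hlt, tmap_add hm hp hlt]
    have hl : 0 ≤ tmap Λm Λp α α₀ := by
      rcases hα'.eq_or_lt with rfl | h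
      · exact (tmap_self Λm Λp α).ge
      · exact (tmap_pos hm hp hlt h).le
    have hr : 0 ≤ tmap Λm Λp β₀ β := by
      rcases hβ.eq_or_lt with rfl | h
      · exact (tmap_self Λm Λp β₀).ge
      · exact (tmap_pos hm hp hlt h).le
    refine ⟨?_, by linarith, ?_, ?_⟩
    · have hc : Continuous fun ζ => (Λp ζ + Λm ζ) / (Λp ζ - Λm ζ) :=
        (hp.add hm).div (hp.sub hm) fun ζ => (sub_pos.2 (hlt ζ)).ne'
      have e1 : ∫ ζ in α..α₀, (Λp ζ + Λm ζ) / (Λp ζ - Λm ζ) = α₀ - α := by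
        rw [intervalIntegral.integral_congr (g := fun _ => (1 : ℝ))]
        · simp
        · intro ζ hζ
          rw [Set.uIcc_of_le hα'] at hζ
          have hz := hC2m ζ ⟨hα.trans hζ.1, hζ.2⟩
          have hlt' := hlt ζ
          rw [hz] at hlt'
          simp [hz, hlt'.ne']
      have e2 : ∫ ζ in β₀..β, (Λp ζ + Λm ζ) / (Λp ζ - Λm ζ) = β₀ - β := by
        rw [intervalIntegral.integral_congr (g := fun _ => (-1 : ℝ))]
        · simp
        · intro ζ hζ
          rw [Set.uIcc_of_le hβ] at hζ
          have hz := hC2p ζ ⟨hζ.1, hζ.2.trans hβ'⟩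
          have hlt' := hlt ζ
          rw [hz] at hlt'
          simp [hz, hlt'.ne]
      unfold xmap
      rw [← intervalIntegral.integral_add_adjacent_intervals
          (hc.intervalIntegrable α α₀) (hc.intervalIntegrable α₀ β),
        ← intervalIntegral.integral_add_adjacent_intervals
          (hc.intervalIntegrable α₀ β₀) (hc.intervalIntegrable β₀ β), e1, e2]
      ring
    · intro heq
      constructor
      · by_contra hne
        linarith [tmap_pos hm hp hlt (lt_of_le_of_ne hα' hne)]
      · by_contra hne
        linarith [tmap_pos hm hp hlt (lt_of_le_of_ne hβ (Ne.symm hne))]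
    · rintro ⟨rfl, rfl⟩
      rfl
  refine ⟨key, ?_⟩
  rintro _ ⟨⟨α, β⟩, ⟨hα, hβ⟩, rfl⟩
  exact ⟨(key α hα β hβ).1, (key α hα β hβ).2.1⟩
end
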